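/- arXiv:1210.7391 — 4 statements merged into one kernel-verified Lean document; each statement's English description precedes it below -/
import Mathlib

section
/- Let p, q ∈ V with p·p ≠ 0, let D := (p·p)(q·q) − (p·q)² and assume D > 0, let τ := ((p·q) + i·√D)/(p·p) ∈ ℂ and Ω := q − conj(τ)·p ∈ V ⊗ ℂ. Set c := −i·(p·p)/(2√D) ∈ ℂ. Then p = c·Ω + conj(c)·conj(Ω) and q = c·τ·Ω + conj(c·τ)·conj(Ω). (Consequently the charge γ = p dx + q dy is a ℂ-linear combination of Ω^{3,0} = (dx + τ dy) ∧ Ω and its conjugate, i.e. γ has Hodge type (3,0) + (0,3): the attractor equation holds.) -/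
/- STATEMENT 2: With τ = (p·q + i√D)/(p·p), Ω = q − conj(τ)·p and
c = −i(p·p)/(2√D), one has p = c·Ω + conj(c)·conj(Ω) and
q = c·τ·Ω + conj(c·τ)·conj(Ω); hence the charge γ = p dx + q dy has Hodge
type (3,0)+(0,3): the attractor equation holds.
We model the complexification V ⊗ ℂ as pairs (re, im) ∈ V × V. -/

noncomputable section

variable {V : Type*}

/-- Inclusion of `V` into its complexification `V × V`. -/
def toC [AddCommGroup V] [Module ℝ V] (v : V) : V × V := (v, 0)

/-- Coordinatewise complex conjugation on the complexification. -/
def conjC [AddCommGroup V] [Module ℝ V] (z : V × V) : V × V := (z.1, -z.2)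

/-- Scalar multiplication by a complex number on the complexification. -/
def csmul [AddCommGroup V] [Module ℝ V] (c : ℂ) (z : V × V) : V × V :=
  (c.re • z.1 - c.im • z.2, c.re • z.2 + c.im • z.1)

theorem attractor_equation_holds
    [AddCommGroup V] [Module ℝ V]
    (b : LinearMap.BilinForm ℝ V) (hsymm : ∀ x y : V, b x y = b y x)
    (p q : V) (hpp : b p p ≠ 0)
    (D : ℝ) (hD : D = b p p * b q q - b p q * b p q) (hDpos : 0 < D)
    (τ : ℂ) (hτ : τ = ((b p q : ℂ) + Complex.I * (Real.sqrt D : ℂ)) / ((b p p : ℝ) : ℂ))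
    (Ω : V × V) (hΩ : Ω = toC q - csmul (starRingEnd ℂ τ) (toC p))
    (c : ℂ) (hc : c = -Complex.I * ((b p p : ℝ) : ℂ) / (2 * (Real.sqrt D : ℂ))) :
    toC p = csmul c Ω + csmul (starRingEnd ℂ c) (conjC Ω) ∧
    toC q = csmul (c * τ) Ω + csmul (starRingEnd ℂ (c * τ)) (conjC Ω) := by
  have hs : Real.sqrt D ≠ 0 := (Real.sqrt_pos.mpr hDpos).ne'
  generalize Real.sqrt D = s at *
  generalize b p p = P at *
  generalize b p q = m at *
  have hτ' : τ = ⟨m / P, s / P⟩ := by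
    have hP : (P : ℂ) ≠ 0 := by exact_mod_cast hpp
    rw [hτ, div_eq_iff hP]
    apply Complex.ext <;> simp <;> field_simp
  have hc' : c = ⟨0, -(P / (2 * s))⟩ := by
    have hs2 : (2 * (s : ℂ)) ≠ 0 := by
      exact mul_ne_zero two_ne_zero (by exact_mod_cast hs)
    rw [hc, div_eq_iff hs2]
    apply Complex.ext <;> simp
    field_simp
  have hct : c * τ = ⟨1 / 2, -(m / (2 * s))⟩ := by
    rw [hc', hτ']
    apply Complex.ext <;> simp <;> field_simp
  rw [hct]
  subst hΩ
  rw [hc', hτ']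
  constructor
  · apply Prod.ext
    · simp only [toC, csmul, conjC, Prod.fst_add, Prod.fst_sub, Prod.snd_sub, Complex.conj_re,
        Complex.conj_im]
      match_scalars <;> field_simp <;> ring
    · simp only [toC, csmul, conjC, Prod.snd_add, Prod.fst_sub, Prod.snd_sub, Complex.conj_re,
        Complex.conj_im]
      module
  · apply Prod.ext
    · simp only [toC, csmul, conjC, Prod.fst_add, Prod.fst_sub, Prod.snd_sub, Complex.conj_re,
        Complex.conj_im]
      match_scalars <;> field_simp <;> ring
    · simp only [toC, csmul, conjC, Prod.snd_add, Prod.fst_sub, Prod.snd_sub, Complex.conj_re,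
        Complex.conj_im]
      module

end
end

section
/- Let v, v*, B, ω ∈ V with v·v = 0, v*·v* = 0, v·v* = 1, B·v = B·v* = 0, ω·v = ω·v* = 0, and ω·ω > 0. Set z := B + i·ω ∈ V ⊗ ℂ and Ω := z − ½(z·z)·v + v* ∈ V ⊗ ℂ. Then Ω·Ω = 0 and Ω·conj(Ω) = 2(ω·ω) > 0. -/
/- STATEMENT 7: Dolgachev's map a(z) = z − ½z²v + v* sends the tube domain
{B + iω : ω² > 0} into the period domain {Ω : Ω² = 0, Ω·conj(Ω) > 0}, for
{v, v*} a standard hyperbolic basis orthogonal to B and ω.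
We model the complexification V ⊗ ℂ as pairs (re, im) ∈ V × V. -/

noncomputable section

variable {V : Type*}

/-- The ℂ-bilinear extension of a real bilinear form to the complexification. -/
def Bc [AddCommGroup V] [Module ℝ V] (b : LinearMap.BilinForm ℝ V) (z w : V × V) : ℂ :=
  ⟨b z.1 w.1 - b z.2 w.2, b z.1 w.2 + b z.2 w.1⟩

theorem tube_domain_to_period_domain
    [AddCommGroup V] [Module ℝ V]
    (b : LinearMap.BilinForm ℝ V) (hsymm : ∀ x y : V, b x y = b y x)
    (v vstar Bf ω : V)
    (hvv : b v v = 0) (hvsvs : b vstar vstar = 0) (hvvs : b v vstar = 1)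
    (hBv : b Bf v = 0) (hBvs : b Bf vstar = 0)
    (hωv : b ω v = 0) (hωvs : b ω vstar = 0)
    (hω : 0 < b ω ω)
    (z : V × V) (hz : z = toC Bf + csmul Complex.I (toC ω))
    (Ω : V × V) (hΩ : Ω = z - csmul (Bc b z z / 2) (toC v) + toC vstar) :
    Bc b Ω Ω = 0 ∧
    Bc b Ω (conjC Ω) = ((2 * b ω ω : ℝ) : ℂ) ∧
    0 < 2 * b ω ω := by
  have hz' : z = (Bf, ω) := by
    rw [hz]; simp [toC, csmul]
  have hc : Bc b z z / 2 = ⟨(b Bf Bf - b ω ω) / 2, b Bf ω⟩ := by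
    rw [hz']
    apply Complex.ext
    · simp [Bc]
    · simp [Bc, hsymm ω Bf]
  have hO : Ω = (Bf - ((b Bf Bf - b ω ω) / 2) • v + vstar, ω - (b Bf ω) • v) := by
    rw [hΩ, hc, hz']; simp [toC, csmul]
  have h1 := hsymm v Bf
  have h2 := hsymm vstar Bf
  have h3 := hsymm v ω
  have h4 := hsymm vstar ω
  have h5 := hsymm vstar v
  have h6 := hsymm ω Bf
  rw [hBv] at h1
  rw [hBvs] at h2
  rw [hωv] at h3
  rw [hωvs] at h4
  rw [hvvs] at h5
  refine ⟨?_, ?_, by linarith⟩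
  · rw [hO]
    apply Complex.ext <;>
      simp only [Bc, map_add, map_sub, map_smul, LinearMap.add_apply, LinearMap.sub_apply,
        LinearMap.smul_apply, smul_eq_mul, Complex.zero_re, Complex.zero_im, hvv, hvsvs, hvvs,
        hBv, hBvs, hωv, hωvs, h1, h2, h3, h4, h5, h6] <;> ring
  · rw [hO]
    apply Complex.ext <;>
      simp only [Bc, conjC, map_add, map_sub, map_neg, map_smul, LinearMap.add_apply,
        LinearMap.sub_apply, LinearMap.smul_apply, smul_eq_mul, Complex.ofReal_re,
        Complex.ofReal_im, hvv, hvsvs, hvvs,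
        hBv, hBvs, hωv, hωvs, h1, h2, h3, h4, h5, h6] <;> ring

end
end

section
/- Let p, q, f, σ₀, ω′, B ∈ V, a, b, t ∈ ℝ, and set ω_J := ω′ + a·f + b·σ₀. Assume: f·f = 0, f·σ₀ = 1, σ₀·σ₀ = −2, f·p = f·q = σ₀·p = σ₀·q = 0, ω′·f = ω′·σ₀ = 0, ω_J·p = ω_J·q = 0, and ω_J·f ≠ 0. Define ω̌ := (1/(ω_J·f))·(q − t·p − ((q − t·p)·B)·f) and B̌ := (1/(ω_J·f))·(ω′ − (ω_J·B)·f). Then B̌·ω̌ = 0. Consequently (exp(B̌ + iω̌), (1, 0, 1)) = −1 − ½(B̌·B̌ − ω̌·ω̌) is a real number, and (exp(B̌ + iω̌), (0, 0, −1)) = 1. -/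
/- STATEMENT 11 (case l ∈ U′ of Theorem 6.2): with mirror data
ω̌ = (1/(ω_J·f))(q − tp − ((q − tp)·B)f) and B̌ = (1/(ω_J·f))(ω′ − (ω_J·B)f)
one has B̌·ω̌ = 0, hence Z(μ(σ₀)) = (exp(B̌+iω̌),(1,0,1)) = −1 − ½(B̌² − ω̌²)
is real and Z(μ(f)) = (exp(B̌+iω̌),(0,0,−1)) = 1. -/

noncomputable section

variable {V : Type*}

/-- The Mukai pairing of a complexified triple with a real triple. -/
def mukaiC [AddCommGroup V] [Module ℝ V] (b : LinearMap.BilinForm ℝ V)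
    (x : ℂ × (V × V) × ℂ) (y : ℝ × V × ℝ) : ℂ :=
  Bc b x.2.1 (toC y.2.1) - x.1 * ((y.2.2 : ℝ) : ℂ) - ((y.1 : ℝ) : ℂ) * x.2.2

/-- exp(z) = (1, z, ½ z·z) in the complexified Mukai lattice. -/
def cexp [AddCommGroup V] [Module ℝ V] (b : LinearMap.BilinForm ℝ V)
    (z : V × V) : ℂ × (V × V) × ℂ :=
  (1, z, Bc b z z / 2)

theorem mirror_central_charge_real_hyperbolic_case
    [AddCommGroup V] [Module ℝ V]
    (b : LinearMap.BilinForm ℝ V) (hsymm : ∀ x y : V, b x y = b y x)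
    (p q f σ₀ ω' Bf : V) (a₀ b₀ t : ℝ)
    (ωJ : V) (hωJ : ωJ = ω' + a₀ • f + b₀ • σ₀)
    (hff : b f f = 0) (hfσ : b f σ₀ = 1) (hσσ : b σ₀ σ₀ = -2)
    (hfp : b f p = 0) (hfq : b f q = 0) (hσp : b σ₀ p = 0) (hσq : b σ₀ q = 0)
    (hω'f : b ω' f = 0) (hω'σ : b ω' σ₀ = 0)
    (hωJp : b ωJ p = 0) (hωJq : b ωJ q = 0)
    (hωJf : b ωJ f ≠ 0)
    (omegaCheck : V)
    (homega : omegaCheck = (1 / b ωJ f) • (q - t • p - (b (q - t • p) Bf) • f))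
    (BCheck : V)
    (hBCheck : BCheck = (1 / b ωJ f) • (ω' - (b ωJ Bf) • f)) :
    b BCheck omegaCheck = 0 ∧
    mukaiC b (cexp b (toC BCheck + csmul Complex.I (toC omegaCheck))) (1, 0, 1) =
      ((-1 - (b BCheck BCheck - b omegaCheck omegaCheck) / 2 : ℝ) : ℂ) ∧
    mukaiC b (cexp b (toC BCheck + csmul Complex.I (toC omegaCheck))) (0, 0, -1) = 1 := by
  have hp : b ω' p = 0 := by
    rw [hωJ] at hωJp
    simpa [hfp, hσp] using hωJp
  have hq : b ω' q = 0 := by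
    rw [hωJ] at hωJq
    simpa [hfq, hσq] using hωJq
  have h0 : b BCheck omegaCheck = 0 := by
    rw [hBCheck, homega]
    generalize 1 / b ωJ f = c
    generalize b ωJ Bf = d
    generalize b (q - t • p) Bf = e
    simp [hp, hq, hfp, hfq, hff, hω'f]
  have h1 : b omegaCheck BCheck = 0 := by rw [hsymm, h0]
  clear homega hBCheck
  refine ⟨h0, ?_, ?_⟩
  · have hB : Bc b (toC BCheck + csmul Complex.I (toC omegaCheck))
        (toC BCheck + csmul Complex.I (toC omegaCheck)) =
        ((b BCheck BCheck - b omegaCheck omegaCheck : ℝ) : ℂ) := by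
      apply Complex.ext <;> simp [Bc, toC, csmul, h0, h1]
    have hZ : ∀ z : V × V, Bc b z (toC 0) = 0 := by
      intro z
      apply Complex.ext <;> simp [Bc, toC]
    simp only [mukaiC, cexp, hB, hZ]
    push_cast
    ring
  · have hZ : ∀ z : V × V, Bc b z (toC 0) = 0 := by
      intro z
      apply Complex.ext <;> simp [Bc, toC]
    simp [mukaiC, cexp, hZ]

end
end

section
/- Let p, q, f, σ₀, ω′, B, l′ ∈ V, a, b, t, m, n ∈ ℝ, and set ω_J := ω′ + a·f + b·σ₀. Assume: f·f = 0, f·σ₀ = 1, σ₀·σ₀ = −2, f·p = f·q = σ₀·p = σ₀·q = 0, ω′·f = ω′·σ₀ = 0, ω_J·p = ω_J·q = 0, ω_J·f ≠ 0, and l′·p = l′·q = l′·f = l′·σ₀ = 0. Define ω̌ := (1/(ω_J·f))·(q − t·p − ((q − t·p)·B)·f) and B̌ := (1/(ω_J·f))·(ω′ − (ω_J·B)·f), and set μ(l) := (n, l′, n − m) ∈ ℝ × V × ℝ, the mirror class of l := l′ + m·f + n·σ₀. Then the central charge Z(μ(l)) := (exp(B̌ + iω̌), μ(l)) is a real number.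 -/
/- STATEMENT 12 (Theorem 6.2): for l = l′ + mf + nσ₀ in Pic(S) with l′
orthogonal to p, q, f, σ₀, the mirror class μ(l) = (n, l′, n − m) has real
central charge Z(μ(l)) = (exp(B̌ + iω̌), μ(l)), where ω̌ and B̌ are the mirror
complexified Kähler data of formulas (84)–(85), t = Re(τ). -/

noncomputable section

variable {V : Type*}

theorem mirror_central_charge_real
    [AddCommGroup V] [Module ℝ V]
    (b : LinearMap.BilinForm ℝ V) (hsymm : ∀ x y : V, b x y = b y x)
    (p q f σ₀ ω' Bf l' : V) (a₀ b₀ t m n : ℝ)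
    (ωJ : V) (hωJ : ωJ = ω' + a₀ • f + b₀ • σ₀)
    (hff : b f f = 0) (hfσ : b f σ₀ = 1) (hσσ : b σ₀ σ₀ = -2)
    (hfp : b f p = 0) (hfq : b f q = 0) (hσp : b σ₀ p = 0) (hσq : b σ₀ q = 0)
    (hω'f : b ω' f = 0) (hω'σ : b ω' σ₀ = 0)
    (hωJp : b ωJ p = 0) (hωJq : b ωJ q = 0)
    (hωJf : b ωJ f ≠ 0)
    (hl'p : b l' p = 0) (hl'q : b l' q = 0) (hl'f : b l' f = 0) (hl'σ : b l' σ₀ = 0)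
    (omegaCheck : V)
    (homega : omegaCheck = (1 / b ωJ f) • (q - t • p - (b (q - t • p) Bf) • f))
    (BCheck : V)
    (hBCheck : BCheck = (1 / b ωJ f) • (ω' - (b ωJ Bf) • f))
    (μl : ℝ × V × ℝ) (hμl : μl = (n, l', n - m))
    (Z : ℂ)
    (hZ : Z = mukaiC b (cexp b (toC BCheck + csmul Complex.I (toC omegaCheck))) μl) :
    Z.im = 0 := by
  have hp : b ω' p = 0 := by
    rw [hωJ] at hωJp
    simpa [hfp, hσp] using hωJp
  have hq : b ω' q = 0 := by
    rw [hωJ] at hωJq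
    simpa [hfq, hσq] using hωJq
  have h1 : b omegaCheck l' = 0 := by
    rw [hsymm, homega]
    simp only [map_smul, map_sub, hl'p, hl'q, hl'f, smul_zero, sub_zero]
  have h2 : b BCheck omegaCheck = 0 := by
    rw [hBCheck, homega]
    generalize b (q - t • p) Bf = c
    generalize b ωJ Bf = d
    simp only [map_smul, map_sub, LinearMap.smul_apply, LinearMap.sub_apply, hp, hq, hω'f, hfp,
      hfq, hff, smul_zero, sub_zero]
  have h3 : b omegaCheck BCheck = 0 := by rw [hsymm, h2]
  have e : toC BCheck + csmul Complex.I (toC omegaCheck) = (BCheck, omegaCheck) := by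
    simp [toC, csmul]
  have e2 : Bc b (BCheck, omegaCheck) (BCheck, omegaCheck)
      = ((b BCheck BCheck - b omegaCheck omegaCheck : ℝ) : ℂ) := by
    apply Complex.ext <;> simp [Bc, h2, h3]
  have e3 : Bc b (BCheck, omegaCheck) (toC l') = ((b BCheck l' : ℝ) : ℂ) := by
    apply Complex.ext <;> simp [Bc, toC, h1]
  have key : Z = ((b BCheck l' - (n - m)
      - n * ((b BCheck BCheck - b omegaCheck omegaCheck) / 2) : ℝ) : ℂ) := by
    rw [hZ, e, hμl]
    simp only [mukaiC, cexp, e2, e3]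
    push_cast
    ring
  rw [key]
  exact Complex.ofReal_im _

end
end
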